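/- Consider a tanh network of width W and weight bound R on ℝ^d, and assume additionally R·W ≥ 2. Then for every layer index ℓ ≥ 1, every component index i < W, all coordinates k, m < d, and every x ∈ ℝ^d, the second-order partial derivative satisfies |∂²_{x_k x_m} v^{(ℓ)}_i(x)| ≤ 2·R^{2ℓ}·W^{2ℓ−2}. -/

import Mathlib

/-- The partial derivative of `f : ℝ^d → ℝ` in the `k`-th coordinate direction. -/
noncomputable def pd {d : ℕ} (f : (Fin d → ℝ) → ℝ) (k : Fin d) : (Fin d → ℝ) → ℝ :=
  fun x => fderiv ℝ f x (Pi.single k 1)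

/-!
Let `s = R W`. Passing to the next layer, the chain rule takes bounds `P` and `Q` on the first and
second derivatives to `s P` and `(s P)² + s Q`, since `|tanh'| ≤ 1` and `|tanh''| ≤ 1`. From the
initial values `R` and `R²` this recursion gives `Q = R² sⁿ (1 + s + ⋯ + sⁿ)` after `n` further
layers, and for `s ≥ 2` the geometric sum is dominated by twice its last term.
-/

section Tanh

theorem hasDerivAt_tanh (x : ℝ) : HasDerivAt Real.tanh (1 - Real.tanh x ^ 2) x := by
  have hcosh : Real.cosh x ≠ 0 := (Real.cosh_pos x).ne'
  rw [funext Real.tanh_eq_sinh_div_cosh]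
  refine ((Real.hasDerivAt_sinh x).fun_div (Real.hasDerivAt_cosh x) hcosh).congr_deriv ?_
  field_simp

theorem deriv_tanh : deriv Real.tanh = fun x => 1 - Real.tanh x ^ 2 :=
  funext fun x => (hasDerivAt_tanh x).deriv

theorem deriv_deriv_tanh (x : ℝ) :
    deriv (deriv Real.tanh) x = -(2 * Real.tanh x * (1 - Real.tanh x ^ 2)) := by
  rw [deriv_tanh]
  simpa using (((hasDerivAt_tanh x).fun_pow 2).const_sub 1).deriv

theorem contDiff_tanh {n : WithTop ℕ∞} : ContDiff ℝ n Real.tanh := by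
  rw [funext Real.tanh_eq_sinh_div_cosh]
  exact Real.contDiff_sinh.div Real.contDiff_cosh fun x => (Real.cosh_pos x).ne'

theorem abs_deriv_tanh_le_one (x : ℝ) : |deriv Real.tanh x| ≤ 1 := by
  rw [deriv_tanh, abs_le]
  constructor <;> linarith [Real.tanh_sq_lt_one x, sq_nonneg (Real.tanh x)]

theorem abs_deriv_deriv_tanh_le_one (x : ℝ) : |deriv (deriv Real.tanh) x| ≤ 1 := by
  rw [deriv_deriv_tanh, abs_neg]
  set t := Real.tanh x
  have ht : t ^ 2 ≤ 1 := (Real.tanh_sq_lt_one x).le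
  calc |2 * t * (1 - t ^ 2)| = 2 * |t| * |1 - t ^ 2| := by simp only [abs_mul, abs_two]
    _ ≤ |t| ^ 2 + |1 - t ^ 2| ^ 2 := two_mul_le_add_sq _ _
    _ = 1 - t ^ 2 * (1 - t ^ 2) := by simp only [sq_abs]; ring
    _ ≤ 1 := sub_le_self _ (mul_nonneg (sq_nonneg t) (sub_nonneg.2 ht))

end Tanh

section Algebra

variable {K : Type*} [CommRing K] [LinearOrder K] [IsStrictOrderedRing K]

theorem abs_sum_mul_le {κ : Type*} [Fintype κ] {a u : κ → K} {R P : K}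
    (ha : ∀ j, |a j| ≤ R) (hu : ∀ j, |u j| ≤ P) :
    |∑ j, a j * u j| ≤ R * Fintype.card κ * P :=
  calc |∑ j, a j * u j| ≤ ∑ j, |a j * u j| := Finset.abs_sum_le_sum_abs _ _
    _ ≤ ∑ _j : κ, R * P := Finset.sum_le_sum fun j _ => by
        rw [abs_mul]
        exact mul_le_mul (ha j) (hu j) (abs_nonneg _) ((abs_nonneg _).trans (ha j))
    _ = R * Fintype.card κ * P := by
        rw [Finset.sum_const, Finset.card_univ, nsmul_eq_mul]; ring

theorem geom_sum_succ_le_two_mul_pow {s : K} (hs : 2 ≤ s) (n : ℕ) :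
    ∑ j ∈ Finset.range (n + 1), s ^ j ≤ 2 * s ^ n := by
  induction n with
  | zero => simp
  | succ n ih =>
    have : 0 ≤ s := zero_le_two.trans hs
    calc ∑ j ∈ Finset.range (n + 2), s ^ j
        = ∑ j ∈ Finset.range (n + 1), s ^ j + s ^ (n + 1) := Finset.sum_range_succ _ _
      _ ≤ 2 * s ^ n + s ^ (n + 1) := by gcongr
      _ ≤ s * s ^ n + s ^ (n + 1) := by gcongr
      _ = 2 * s ^ (n + 1) := by ring

theorem sq_mul_pow_mul_geom_sum_le {R W : K} (hRW : 2 ≤ R * W) {ℓ : ℕ} (hℓ : 1 ≤ ℓ) :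
    R ^ 2 * (R * W) ^ (ℓ - 1) * ∑ j ∈ Finset.range ℓ, (R * W) ^ j ≤
      2 * R ^ (2 * ℓ) * W ^ (2 * ℓ - 2) := by
  obtain ⟨n, rfl⟩ := Nat.exists_eq_add_of_le' hℓ
  have : 0 ≤ R * W := zero_le_two.trans hRW
  calc R ^ 2 * (R * W) ^ n * ∑ j ∈ Finset.range (n + 1), (R * W) ^ j
      ≤ R ^ 2 * (R * W) ^ n * (2 * (R * W) ^ n) := by
        gcongr
        exact geom_sum_succ_le_two_mul_pow hRW n
    _ = 2 * R ^ (2 * (n + 1)) * W ^ (2 * (n + 1) - 2) := by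
        rw [show 2 * (n + 1) - 2 = 2 * n by omega]
        ring

end Algebra

section Fderiv

variable {E F : Type*} [NormedAddCommGroup E] [NormedSpace ℝ E]
  [NormedAddCommGroup F] [NormedSpace ℝ F]

theorem fderiv_real_comp {σ : ℝ → ℝ} {g : E → ℝ} (hσ : Differentiable ℝ σ)
    (hg : Differentiable ℝ g) :
    fderiv ℝ (fun x => σ (g x)) = fun x => deriv σ (g x) • fderiv ℝ g x :=
  funext fun x => ((hσ (g x)).hasDerivAt.comp_hasFDerivAt x (hg x).hasFDerivAt).fderiv

theorem fderiv_fderiv_real_comp_apply {σ : ℝ → ℝ} {g : E → ℝ} (hσ : ContDiff ℝ 2 σ)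
    (hg : ContDiff ℝ 2 g) (x u w : E) :
    fderiv ℝ (fderiv ℝ fun x => σ (g x)) x w u =
      deriv (deriv σ) (g x) * (fderiv ℝ g x w * fderiv ℝ g x u) +
        deriv σ (g x) * fderiv ℝ (fderiv ℝ g) x w u := by
  have hg₁ : Differentiable ℝ g := hg.differentiable two_ne_zero
  have hg₂ : Differentiable ℝ (fderiv ℝ g) :=
    (hg.fderiv_right (m := 1) le_rfl).differentiable one_ne_zero
  have hσ₂ : Differentiable ℝ (deriv σ) := hσ.differentiable_deriv_two
  rw [fderiv_real_comp (hσ.differentiable two_ne_zero) hg₁,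
    fderiv_fun_smul ((hσ₂.fun_comp hg₁) x) (hg₂ x), fderiv_real_comp hσ₂ hg₁]
  simp only [add_apply, smul_apply, ContinuousLinearMap.smulRight_apply, smul_eq_mul]
  ring

theorem fderiv_sum_const_smul {κ : Type*} [Fintype κ] {f : κ → E → F}
    (hf : ∀ j, Differentiable ℝ (f j)) (a : κ → ℝ) :
    fderiv ℝ (fun x => ∑ j, a j • f j x) = fun x => ∑ j, a j • fderiv ℝ (f j) x :=
  funext fun x =>
    (HasFDerivAt.fun_sum fun j _ => (hf j x).hasFDerivAt.fun_const_smul (a j)).fderiv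

end Fderiv

theorem pd_pd_eq_fderiv_fderiv {d : ℕ} {f : (Fin d → ℝ) → ℝ} (hf : ContDiff ℝ 2 f)
    (k m : Fin d) (x : Fin d → ℝ) :
    pd (pd f k) m x = fderiv ℝ (fderiv ℝ f) x (Pi.single m 1) (Pi.single k 1) := by
  have hf₂ : Differentiable ℝ (fderiv ℝ f) :=
    (hf.fderiv_right (m := 1) le_rfl).differentiable one_ne_zero
  change fderiv ℝ (fun y => fderiv ℝ f y (Pi.single k 1)) x (Pi.single m 1) = _
  rw [fderiv_clm_apply (hf₂ x) (differentiableAt_const _)]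
  simp

section Network

variable {E κ : Type*} [NormedAddCommGroup E] [NormedSpace ℝ E] [Fintype κ] {S : Set E}

/-- The `C²` function `f` has first and second directional derivatives bounded by `P` and `Q`
respectively, along all directions taken from `S`. These are the quantities that are propagated
through the layers of a network. The set `S` is fixed, rather than using operator norms, so that
for the coordinate directions no constant depends on the dimension of `E`. -/
structure HasDirDerivBounds (S : Set E) (f : E → ℝ) (P Q : ℝ) : Prop where
  contDiff : ContDiff ℝ 2 f
  abs_fderiv_le : ∀ u ∈ S, ∀ x, |fderiv ℝ f x u| ≤ P
  abs_fderiv_fderiv_le : ∀ u ∈ S, ∀ w ∈ S, ∀ x, |fderiv ℝ (fderiv ℝ f) x w u| ≤ Q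

namespace HasDirDerivBounds

theorem clm {φ : E →L[ℝ] ℝ} {R : ℝ} (hφ : ∀ u ∈ S, |φ u| ≤ R) : HasDirDerivBounds S φ R 0 := by
  have hfderiv : fderiv ℝ φ = fun _ => φ := funext fun _ => φ.fderiv
  refine ⟨φ.contDiff, fun u hu x => ?_, fun u _ w _ x => ?_⟩
  · simpa only [hfderiv] using hφ u hu
  · simp [hfderiv]

theorem add_const {f : E → ℝ} {P Q : ℝ} (hf : HasDirDerivBounds S f P Q) (c : ℝ) :
    HasDirDerivBounds S (fun x => f x + c) P Q := by
  have hfderiv : fderiv ℝ (fun x => f x + c) = fderiv ℝ f := funext fun _ => fderiv_add_const c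
  refine ⟨hf.contDiff.add contDiff_const, ?_, ?_⟩ <;> rw [hfderiv]
  exacts [hf.abs_fderiv_le, hf.abs_fderiv_fderiv_le]

theorem sum_const_mul {f : κ → E → ℝ} {a : κ → ℝ} {R P Q : ℝ} (ha : ∀ j, |a j| ≤ R)
    (hf : ∀ j, HasDirDerivBounds S (f j) P Q) :
    HasDirDerivBounds S (fun x => ∑ j, a j * f j x)
      (R * Fintype.card κ * P) (R * Fintype.card κ * Q) := by
  have hf₁ (j : κ) : Differentiable ℝ (f j) := (hf j).contDiff.differentiable two_ne_zero
  have hf₂ (j : κ) : Differentiable ℝ (fderiv ℝ (f j)) :=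
    ((hf j).contDiff.fderiv_right (m := 1) le_rfl).differentiable one_ne_zero
  simp only [← smul_eq_mul (a := a _)]
  refine ⟨ContDiff.sum fun j _ => (hf j).contDiff.const_smul (a j),
    fun u hu x => ?_, fun u hu w hw x => ?_⟩
  · rw [fderiv_sum_const_smul hf₁]
    simpa using abs_sum_mul_le ha fun j => (hf j).abs_fderiv_le u hu x
  · rw [fderiv_sum_const_smul hf₁, fderiv_sum_const_smul hf₂]
    simpa using abs_sum_mul_le ha fun j => (hf j).abs_fderiv_fderiv_le u hu w hw x

theorem real_comp {σ : ℝ → ℝ} {g : E → ℝ} {L M P Q : ℝ} (hσ : ContDiff ℝ 2 σ)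
    (hL : ∀ y, |deriv σ y| ≤ L) (hM : ∀ y, |deriv (deriv σ) y| ≤ M)
    (hg : HasDirDerivBounds S g P Q) :
    HasDirDerivBounds S (fun x => σ (g x)) (L * P) (M * P ^ 2 + L * Q) := by
  have hL₀ : 0 ≤ L := (abs_nonneg _).trans (hL 0)
  have hM₀ : 0 ≤ M := (abs_nonneg _).trans (hM 0)
  refine ⟨hσ.comp hg.contDiff, fun u hu x => ?_, fun u hu w hw x => ?_⟩
  · rw [fderiv_real_comp (hσ.differentiable two_ne_zero) (hg.contDiff.differentiable two_ne_zero),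
      smul_apply, smul_eq_mul, abs_mul]
    gcongr
    exacts [hL _, hg.abs_fderiv_le u hu x]
  · have hP₀ : 0 ≤ P := (abs_nonneg _).trans (hg.abs_fderiv_le u hu x)
    rw [fderiv_fderiv_real_comp_apply hσ hg.contDiff, sq]
    refine (abs_add_le _ _).trans ?_
    simp only [abs_mul]
    gcongr
    exacts [hM _, hg.abs_fderiv_le w hw x, hg.abs_fderiv_le u hu x, hL _,
      hg.abs_fderiv_fderiv_le u hu w hw x]

end HasDirDerivBounds

theorem hasDirDerivBounds_network_layer {σ : ℝ → ℝ} {L M R : ℝ}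
    (hσ : ContDiff ℝ 2 σ) (hL : ∀ y, |deriv σ y| ≤ L) (hM : ∀ y, |deriv (deriv σ) y| ≤ M)
    (φ : κ → E →L[ℝ] ℝ) (b₀ : κ → ℝ) (A : ℕ → κ → κ → ℝ) (b : ℕ → κ → ℝ)
    (hφ : ∀ i, ∀ u ∈ S, |φ i u| ≤ R) (hA : ∀ n i j, |A n i j| ≤ R)
    (v : ℕ → E → κ → ℝ) (hv₀ : ∀ i x, v 0 x i = σ (φ i x + b₀ i))
    (hv : ∀ n i x, v (n + 1) x i = σ (∑ j, A n i j * v n x j + b n i)) (n : ℕ) (i : κ) :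
    HasDirDerivBounds S (fun x => v n x i) (L * R * (L * R * Fintype.card κ) ^ n)
      (M * R ^ 2 * (L * R * Fintype.card κ) ^ n *
        ∑ j ∈ Finset.range (n + 1), (L * R * Fintype.card κ) ^ j) := by
  induction n generalizing i with
  | zero =>
    simp only [hv₀]
    simpa using ((HasDirDerivBounds.clm (hφ i)).add_const (b₀ i)).real_comp hσ hL hM
  | succ n ih =>
    simp only [hv]
    convert ((HasDirDerivBounds.sum_const_mul (hA n i) ih).add_const (b n i)).real_comp
      hσ hL hM using 1
    · ring
    · rw [Finset.sum_range_succ _ (n + 1)]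
      ring

theorem tanh_network_second_deriv_bound_general {d : ℕ} {σ : ℝ → ℝ} {L M R : ℝ}
    (hσ : ContDiff ℝ 2 σ) (hL : ∀ y, |deriv σ y| ≤ L) (hM : ∀ y, |deriv (deriv σ) y| ≤ M)
    (A1 : κ → Fin d → ℝ) (b1 : κ → ℝ) (A : ℕ → κ → κ → ℝ) (b : ℕ → κ → ℝ)
    (hA1 : ∀ i j, |A1 i j| ≤ R) (hA : ∀ ℓ i j, |A ℓ i j| ≤ R)
    (v : ℕ → (Fin d → ℝ) → κ → ℝ)
    (hv1 : ∀ i x, v 1 x i = σ (∑ j, A1 i j * x j + b1 i))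
    (hv : ∀ ℓ : ℕ, 2 ≤ ℓ → ∀ i x, v ℓ x i = σ (∑ j, A ℓ i j * v (ℓ - 1) x j + b ℓ i))
    (ℓ : ℕ) (hℓ : 1 ≤ ℓ) (i : κ) (k m : Fin d) (x : Fin d → ℝ) :
    |pd (pd (fun y => v ℓ y i) k) m x| ≤
      M * R ^ 2 * (L * R * Fintype.card κ) ^ (ℓ - 1) *
        ∑ j ∈ Finset.range ℓ, (L * R * Fintype.card κ) ^ j := by
  obtain ⟨n, rfl⟩ := Nat.exists_eq_add_of_le' hℓ
  let φ (i : κ) : (Fin d → ℝ) →L[ℝ] ℝ := ∑ j, A1 i j • ContinuousLinearMap.proj j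
  have hφ (i : κ) : ∀ u ∈ Set.range fun k : Fin d => Pi.single k (1 : ℝ), |φ i u| ≤ R := by
    simpa [φ, Pi.single_apply] using hA1 i
  have hbounds := hasDirDerivBounds_network_layer hσ hL hM φ b1 (fun n => A (n + 2))
    (fun n => b (n + 2)) hφ (fun n => hA (n + 2)) (fun n => v (n + 1))
    (by simpa [φ] using hv1) (fun n => hv (n + 2) (by omega)) n i
  rw [pd_pd_eq_fderiv_fderiv hbounds.contDiff]
  exact hbounds.abs_fderiv_fderiv_le _ ⟨k, rfl⟩ _ ⟨m, rfl⟩ x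

end Network

theorem tanh_network_second_deriv_bound (d W : ℕ) (hW : 1 ≤ W) (R : ℝ) (hR : 0 ≤ R)
    (A1 : Fin W → Fin d → ℝ) (b1 : Fin W → ℝ)
    (A : ℕ → Fin W → Fin W → ℝ) (b : ℕ → Fin W → ℝ)
    (hA1 : ∀ i j, |A1 i j| ≤ R) (hA : ∀ ℓ i j, |A ℓ i j| ≤ R)
    (hRW : 2 ≤ R * (W : ℝ))
    (v : ℕ → (Fin d → ℝ) → Fin W → ℝ)
    (hv1 : ∀ (i : Fin W) (x : Fin d → ℝ),
      v 1 x i = Real.tanh (∑ j, A1 i j * x j + b1 i))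
    (hv : ∀ ℓ : ℕ, 2 ≤ ℓ → ∀ (i : Fin W) (x : Fin d → ℝ),
      v ℓ x i = Real.tanh (∑ j, A ℓ i j * v (ℓ - 1) x j + b ℓ i)) :
    ∀ ℓ : ℕ, 1 ≤ ℓ → ∀ (i : Fin W) (k m : Fin d) (x : Fin d → ℝ),
      |pd (pd (fun y => v ℓ y i) k) m x| ≤ 2 * R ^ (2 * ℓ) * (W : ℝ) ^ (2 * ℓ - 2) := by
  intro ℓ hℓ i k m x
  refine (tanh_network_second_deriv_bound_general contDiff_tanh abs_deriv_tanh_le_one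
    abs_deriv_deriv_tanh_le_one A1 b1 A b hA1 hA v hv1 hv ℓ hℓ i k m x).trans ?_
  simpa using sq_mul_pow_mul_geom_sum_le hRW hℓ
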